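/- Let X be a compact metric space and φ: X → X a homeomorphism. Let x₁, x₂, …, x_q be finitely many points of X, none of which is φ-periodic, whose φ-orbits are pairwise disjoint. For each p ∈ {1, …, q} choose β_p < 0 and an interval J_p that is either (−∞, β_p] or (−∞, β_p). Then there exists a continuous function F: X → ℝ such that: (a) for each p ∈ {1, …, q} and each β ∈ ℝ, there is an e^{βF}-conformal measure concentrated on the φ-orbit {φ^k(x_p) : k ∈ ℤ} of x_p if and only if β ∈ J_p; and (b) ∫_X F dν = 0 for every φ-invariant Borel probability measure ν on X. -/

import Mathlib

open MeasureTheory Filter Topology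

/-- A Borel probability measure `m` is `e^{βF}`-conformal for the homeomorphism `φ` if
`m(φ(B)) = ∫_B e^{βF} dm` for every Borel set `B ⊆ X`. -/
def IsConformalMeasure {X : Type*} [TopologicalSpace X] [MeasurableSpace X]
    (φ : X ≃ₜ X) (F : X → ℝ) (β : ℝ) (m : Measure X) : Prop :=
  IsProbabilityMeasure m ∧
    ∀ B : Set X, MeasurableSet B →
      m ((φ : X → X) '' B) = ∫⁻ x in B, ENNReal.ofReal (Real.exp (β * F x)) ∂m

/-- A measure `ν` is `φ`-invariant if `ν(φ⁻¹(B)) = ν(B)` for all Borel sets `B`. -/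
def IsInvariantMeasure {X : Type*} [TopologicalSpace X] [MeasurableSpace X]
    (φ : X ≃ₜ X) (ν : Measure X) : Prop :=
  ∀ B : Set X, MeasurableSet B → ν ((φ : X → X) ⁻¹' B) = ν B

/-- The (two-sided) `φ`-orbit `{φᵏ(x) : k ∈ ℤ}` of a point `x`. -/
def zOrbit {X : Type*} [TopologicalSpace X] (φ : X ≃ₜ X) (x : X) : Set X :=
  {y : X | ∃ n : ℕ, y = (φ : X → X)^[n] x ∨ y = (φ.symm : X → X)^[n] x}

/-!
Along the orbit of `x`, the function `F` has a potential `H : ℤ → ℝ` with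
`H (k + 1) - H k = F (φ ^ k x)`, and an `exp (β * F)`-conformal measure has to give `φ ^ k x` a mass
proportional to `exp (β * H k)`. Such a measure lives on the orbit if and only if
`∑ k, exp (β * H k)` is finite, so `H` must grow like a prescribed profile `g |k|`: a multiple of
`log k` for an open interval, of `log k + 2 * log (log k)` for a closed one.

Split `g` into finitely supported bumps `c n` whose increments are bounded by a summable sequence.
Spread `c n` along the orbits of the given points from small neighbourhoods, to a continuous
function `h n`. The coboundaries `h n ∘ φ - h n` then have a convergent sum `F`, which integrates to
zero against every invariant measure and has the potential `∑ n, h n (φ ^ k x)`. The orbit of `x`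
may return to the neighbourhoods, which makes this potential exceed `g |k|`; but the smaller the
neighbourhoods, the rarer the returns, and raising `H` on a sparse set affects neither the
convergence nor the divergence of `∑ k, exp (β * H k)` when `β < 0`.
-/

open scoped NNReal ENNReal BoundedContinuousFunction

/-! ### Sparse sets of natural numbers -/

/-- `B` is `Q`-sparse if `Q` disjoint copies of `B` inject into `ℕ` by a map that never moves an
element up. In particular, `B` fills at most the proportion `1 / Q` of every initial segment
of `ℕ`. -/
def IsSparse (Q : ℕ) (B : Set ℕ) : Prop :=
  ∃ f : Fin Q × B → ℕ, Function.Injective f ∧ ∀ a, f a ≤ a.2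

lemma IsSparse.mono {Q : ℕ} {B B' : Set ℕ} (hB : IsSparse Q B) (h : B' ⊆ B) : IsSparse Q B' := by
  obtain ⟨f, hf, hle⟩ := hB
  exact ⟨fun a => f (a.1, Set.inclusion h a.2),
    hf.comp (Function.injective_id.prodMap (Set.inclusion_injective h)), fun a => hle _⟩

lemma IsSparse.mul_tsum_le {Q : ℕ} {B : Set ℕ} (hB : IsSparse Q B) {e : ℕ → ℝ≥0∞}
    (he : Antitone e) : Q * ∑' k : B, e k ≤ ∑' k, e k := by
  obtain ⟨f, hf, hle⟩ := hB
  calc Q * ∑' k : B, e k = ∑' a : Fin Q × B, e a.2 := by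
        rw [ENNReal.tsum_prod (f := fun (_ : Fin Q) (k : B) => e k)]
        simp
    _ ≤ ∑' a, e (f a) := ENNReal.tsum_le_tsum fun a => he (hle a)
    _ ≤ ∑' k, e k := ENNReal.tsum_comp_le_tsum_of_injective hf e

lemma tsum_iUnion_le_half_of_isSparse {B : ℕ → Set ℕ} (hB : ∀ n, IsSparse (2 ^ (n + 2)) (B n))
    {e : ℕ → ℝ≥0∞} (he : Antitone e) :
    ∑' k : ⋃ n, B n, e k ≤ 2⁻¹ * ∑' k, e k := by
  have hstage (n : ℕ) : ∑' k : B n, e k ≤ 2⁻¹ * 2⁻¹ ^ (n + 1) * ∑' k, e k := by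
    rw [← pow_succ', ← ENNReal.inv_pow, ← ENNReal.div_eq_inv_mul,
      ENNReal.le_div_iff_mul_le (by simp) (by simp), mul_comm]
    exact_mod_cast (hB n).mul_tsum_le he
  calc ∑' k : ⋃ n, B n, e k ≤ ∑' n, ∑' k : B n, e k := ENNReal.tsum_iUnion_le_tsum _ _
    _ ≤ ∑' n, 2⁻¹ * 2⁻¹ ^ (n + 1) * ∑' k, e k := ENNReal.tsum_le_tsum hstage
    _ = 2⁻¹ * ∑' k, e k := by
        rw [ENNReal.tsum_mul_right, ENNReal.tsum_mul_left, ENNReal.tsum_geometric_add_one,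
          ENNReal.one_sub_inv_two, inv_inv, ENNReal.inv_mul_cancel (by simp) (by simp), mul_one]

lemma tsum_le_two_mul_tsum_compl_of_isSparse {B : ℕ → Set ℕ}
    (hB : ∀ n, IsSparse (2 ^ (n + 2)) (B n)) {e : ℕ → ℝ≥0∞} (he : Antitone e)
    (htop : ∀ k, e k ≠ ⊤) : ∑' k, e k ≤ 2 * ∑' k : ↥(⋃ n, B n)ᶜ, e k := by
  refine ENNReal.tsum_le_of_sum_range_le fun L => ?_
  -- Truncating to `[0, L)` keeps `e` antitone and makes its sum finite.
  let t : ℕ → ℝ≥0∞ := fun k => if k < L then e k else 0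
  have ht : Antitone t := fun i j hij => by
    simp only [t]
    split_ifs <;> first | exact he hij | omega | simp
  have ht_le : ∀ k, t k ≤ e k := fun k => by
    simp only [t]
    split_ifs <;> simp
  have ht_sum : ∑' k, t k = ∑ k ∈ Finset.range L, e k := by
    rw [tsum_eq_sum (s := Finset.range L) fun k hk => if_neg (by simpa using hk)]
    exact Finset.sum_congr rfl fun k hk => if_pos (Finset.mem_range.1 hk)
  set S := ∑ k ∈ Finset.range L, e k
  have hS : S ≠ ⊤ := ENNReal.sum_ne_top.2 fun k _ => htop k
  set G := ∑' k : ↥(⋃ n, B n)ᶜ, e k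
  have hsplit : S ≤ 2⁻¹ * S + G := calc
    S = ∑' k : ⋃ n, B n, t k + ∑' k : ↥(⋃ n, B n)ᶜ, t k := by
        rw [← ht_sum, ENNReal.summable.tsum_add_tsum_compl ENNReal.summable]
    _ ≤ 2⁻¹ * S + G := by
        rw [← ht_sum]
        exact add_le_add (tsum_iUnion_le_half_of_isSparse hB ht)
          (ENNReal.tsum_le_tsum fun k => ht_le k)
  have hhalf : 2⁻¹ * S ≤ G := by
    have hfin : 2⁻¹ * S ≠ ⊤ := ENNReal.mul_ne_top (by simp) hS
    refine (ENNReal.add_le_add_iff_left hfin).1 (le_trans (le_of_eq ?_) hsplit)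
    rw [← add_mul, ENNReal.inv_two_add_inv_two, one_mul]
  rwa [← ENNReal.div_eq_inv_mul, ENNReal.div_le_iff (by simp) (by simp), mul_comm] at hhalf

-- The witness maps the `i`-th copy of `k` to `k - (2N + 1)i`: the copies of the window around a
-- point of `V` are disjoint translates of it, which fill part of the gap in `V` below that point.
lemma isSparse_of_separated {V : Set ℤ} {R : ℤ} (h0 : 0 ∈ V)
    (hV : ∀ v ∈ V, ∀ w ∈ V, |v - w| ≤ R → v = w) {N Q : ℕ} (hR : (2 * N + 1) * (Q + 1) ≤ R) :
    IsSparse Q {k : ℕ | ∃ v ∈ V, v ≠ 0 ∧ |k - v| ≤ N} := by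
  have hshift (i : Fin Q) : (2 * N + 1) * (i : ℤ) + (2 * N + 1) ≤ R := by nlinarith [i.2]
  have hbig {k : ℕ} {v : ℤ} (hv : v ∈ V) (hv0 : v ≠ 0) (hk : |k - v| ≤ N) : R < k + N := by
    have : R < |v - 0| := not_le.1 fun h => hv0 (hV v hv 0 h0 h)
    rw [sub_zero] at this
    grind
  refine ⟨fun a => a.2 - (2 * N + 1) * a.1, ?_, fun a => Nat.sub_le _ _⟩
  rintro ⟨i, k, v, hv, hv0, hkv⟩ ⟨j, l, w, hw, hw0, hlw⟩ heq
  have hk := hbig hv hv0 hkv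
  have hl := hbig hw hw0 hlw
  have hi := hshift i
  have hj := hshift j
  have heq : (k : ℤ) - l = (2 * N + 1) * (i - j) := by
    simp only at heq
    zify [show (2 * N + 1) * (i : ℕ) ≤ k by zify; linarith,
      show (2 * N + 1) * (j : ℕ) ≤ l by zify; linarith] at heq
    linarith
  have hvw : v = w := hV v hv w hw (by grind)
  have hkl : (k : ℤ) - l = 0 :=
    Int.eq_zero_of_abs_lt_dvd ⟨_, heq⟩ (by grind)
  have hij : (i : ℤ) - j = 0 := by
    rw [hkl] at heq
    exact (mul_eq_zero.1 heq.symm).resolve_left (by positivity)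
  ext
  · exact_mod_cast sub_eq_zero.1 hij
  · exact_mod_cast sub_eq_zero.1 hkl

/-! ### Splitting a slowly growing profile into bumps -/

/-- A growth profile: a nondecreasing sequence that starts at `0` and whose increments tend
to `0`. -/
structure IsSlowProfile (g : ℕ → ℝ≥0) : Prop where
  monotone : Monotone g
  map_zero : g 0 = 0
  tendsto_dist : Tendsto (fun k => dist (g (k + 1)) (g k)) atTop (𝓝 0)

lemma exists_monotone_threshold {P : ℕ → ℕ → Prop} (h0 : ∀ k, P 0 k)
    (hP : ∀ n, ∀ᶠ k in atTop, P n k) :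
    ∃ M : ℕ → ℕ, Monotone M ∧ M 0 = 0 ∧ (∀ n, n ≤ M n) ∧ ∀ n k, M n ≤ k → P n k := by
  obtain ⟨M, hM, hMP⟩ := extraction_forall_of_eventually fun n =>
    eventually_forall_ge_atTop.2 (hP n)
  refine ⟨fun n => if n = 0 then 0 else M n, fun i j hij => ?_, if_pos rfl, fun n => ?_,
    fun n k hk => ?_⟩
  · have := hM.monotone hij
    grind
  · have := hM.le_apply (x := n)
    grind
  · rcases eq_or_ne n 0 with rfl | hn
    · exact h0 k
    · exact hMP n k (by simpa [hn] using hk)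

lemma exists_summable_slope_threshold {a : ℕ → ℝ} (ha : Tendsto a atTop (𝓝 0)) :
    ∃ (s : ℕ → ℝ≥0) (M : ℕ → ℕ), (∀ n, 0 < s n) ∧ Antitone s ∧ Summable s ∧
      Monotone M ∧ M 0 = 0 ∧ (∀ n, n ≤ M n) ∧ ∀ n k, M n ≤ k → a k ≤ s n := by
  obtain ⟨K, hK, haK⟩ : ∃ K : ℝ≥0, 0 < K ∧ ∀ k, a k ≤ K := by
    obtain ⟨K, hK⟩ := ha.bddAbove_range
    exact ⟨K.toNNReal + 1, by positivity, fun k => (hK ⟨k, rfl⟩).trans <|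
      K.le_coe_toNNReal.trans (by simp)⟩
  have hs_pos (n : ℕ) : 0 < K * (1 / 2) ^ n := by positivity
  obtain ⟨M, hM⟩ := exists_monotone_threshold (P := fun n k => a k ≤ (K * (1 / 2) ^ n : ℝ≥0))
    (by simpa using haK) (fun n => ha.eventually_le_const (hs_pos n))
  refine ⟨_, M, hs_pos, fun i j hij => ?_, ?_, hM⟩
  · exact mul_le_mul_right (pow_le_pow_of_le_one (by simp) (by norm_num) hij) K
  · exact NNReal.summable_coe.1 (by simpa using summable_geometric_two.mul_left (K : ℝ))

/-- The profile `g` up to time `M`, after which it is cut down to zero by a line of slope `-s`. -/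
noncomputable def cutoff (g : ℕ → ℝ≥0) (M : ℕ) (s : ℝ≥0) (k : ℕ) : ℝ≥0 :=
  -- `k - M` is truncated: the line is constant before `M`.
  min (g k) (g M - s * (k - M : ℕ))

section cutoff

variable {g : ℕ → ℝ≥0} {M M' k : ℕ} {s s' : ℝ≥0}

lemma cutoff_le : cutoff g M s k ≤ g k := min_le_left _ _

lemma cutoff_of_le (hg : Monotone g) (hk : k ≤ M) : cutoff g M s k = g k := by
  simp [cutoff, Nat.sub_eq_zero_of_le hk, hg hk]

lemma cutoff_zero_left (h0 : g 0 = 0) : cutoff g 0 s k = 0 := by simp [cutoff, h0]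

lemma cutoff_mono (hg : Monotone g) (hM : M ≤ M') (hs : s' ≤ s) :
    cutoff g M s k ≤ cutoff g M' s' k := by
  rcases le_total k M' with hk | -
  · exact cutoff_le.trans_eq (cutoff_of_le hg hk).symm
  · exact min_le_min le_rfl (tsub_le_tsub (hg hM)
      (mul_le_mul' hs (Nat.cast_le.2 (Nat.sub_le_sub_left hM k))))

lemma eventually_cutoff_eq_zero (hs : 0 < s) : ∀ᶠ k in atTop, cutoff g M s k = 0 := by
  obtain ⟨L, hL⟩ := exists_nat_ge (g M / s)
  filter_upwards [eventually_ge_atTop (L + M)] with k hk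
  have hkL : g M / s ≤ (k - M : ℕ) := hL.trans (Nat.cast_le.2 (by omega))
  rw [div_le_iff₀' hs] at hkL
  rw [cutoff, tsub_eq_zero_of_le hkL, min_eq_right zero_le]

lemma dist_cutoff_succ_le (hg : dist (g (k + 1)) (g k) ≤ s') (hs : s ≤ s') :
    dist (cutoff g M s (k + 1)) (cutoff g M s k) ≤ s' := by
  have hline : dist (g M - s * (k + 1 - M : ℕ)) (g M - s * (k - M : ℕ)) ≤ s := by
    have hstep : ((k + 1 - M : ℕ) : ℝ) - (k - M : ℕ) ∈ Set.Icc 0 1 := by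
      rcases le_or_gt M k with hk | hk
      · simp [Nat.sub_add_comm hk]
      · simp [Nat.sub_eq_zero_of_le hk.le, Nat.sub_eq_zero_of_le (Nat.succ_le_of_lt hk)]
    simp only [NNReal.dist_eq, NNReal.coe_sub_def, NNReal.coe_mul, NNReal.coe_natCast]
    refine (abs_max_sub_max_le_abs _ _ _).trans ?_
    rw [sub_sub_sub_cancel_left, ← mul_sub, abs_mul, abs_sub_comm, abs_of_nonneg hstep.1,
      NNReal.abs_eq]
    exact mul_le_of_le_one_right s.2 hstep.2
  simp only [cutoff, NNReal.dist_eq, NNReal.coe_min] at *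
  exact (abs_min_sub_min_le_max _ _ _ _).trans (max_le hg (hline.trans hs))

end cutoff

lemma dist_tsub_tsub_le {a b a' b' d d' : ℝ≥0} (hb : b ≤ a) (hb' : b' ≤ a') (ha : dist a a' ≤ d)
    (hd : dist b b' ≤ d') : dist (a - b) (a' - b') ≤ d + d' := by
  rw [NNReal.dist_eq, NNReal.coe_sub hb, NNReal.coe_sub hb', sub_sub_sub_comm]
  exact (abs_sub _ _).trans (add_le_add ha hd)

theorem IsSlowProfile.exists_hasSum_bumps {g : ℕ → ℝ≥0} (hg : IsSlowProfile g) :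
    ∃ (c : ℕ → ℕ → ℝ≥0) (d : ℕ → ℝ≥0), Summable d ∧
      (∀ n, ∀ᶠ k in atTop, c n k = 0) ∧ (∀ n k, dist (c n (k + 1)) (c n k) ≤ d n) ∧
      ∀ k, HasSum (fun n => c n k) (g k) := by
  obtain ⟨s, M, hs_pos, hs_anti, hs_sum, hM, hM0, hMn, hMinc⟩ :=
    exists_summable_slope_threshold hg.tendsto_dist
  let G : ℕ → ℕ → ℝ≥0 := fun n => cutoff g (M n) (s n)
  have hG_mono (k : ℕ) : Monotone fun n => G n k := fun i j hij =>
    cutoff_mono hg.monotone (hM hij) (hs_anti hij)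
  have hG_eq {n k : ℕ} (hk : k ≤ M n) : G n k = g k := cutoff_of_le hg.monotone hk
  have hbump_zero {n k : ℕ} (hk : k ≤ M n) : G (n + 1) k - G n k = 0 := by
    rw [hG_eq hk, hG_eq (hk.trans (hM n.le_succ)), tsub_self]
  refine ⟨fun n k => G (n + 1) k - G n k, fun n => s n + s n, hs_sum.add hs_sum, fun n => ?_,
    fun n k => ?_, fun k => ?_⟩
  · filter_upwards [eventually_cutoff_eq_zero (g := g) (M := M (n + 1)) (hs_pos (n + 1))] with k hk
    simp [G, hk]
  · rcases le_or_gt (M n) k with hk | hk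
    · exact dist_tsub_tsub_le (hG_mono _ n.le_succ) (hG_mono _ n.le_succ)
        (dist_cutoff_succ_le (hMinc n k hk) (hs_anti n.le_succ))
        (dist_cutoff_succ_le (hMinc n k hk) le_rfl)
    · simp [hbump_zero hk.le, hbump_zero (Nat.succ_le_of_lt hk)]
  · have hsum : ∑ n ∈ Finset.range k, (G (n + 1) k - G n k) = g k := by
      rw [Finset.sum_range_tsub (hG_mono k), hG_eq (hMn k)]
      simp [G, hM0, cutoff_zero_left hg.map_zero]
    rw [← hsum]
    exact hasSum_sum_of_ne_finset_zero fun n hn =>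
      hbump_zero ((not_lt.1 (mt Finset.mem_range.2 hn)).trans (hMn n))

/-! ### Logarithmic profiles -/

lemma isSlowProfile_toNNReal {f : ℕ → ℝ} (hf : Monotone f) (h0 : f 0 = 0)
    (hinc : Tendsto (fun k => f (k + 1) - f k) atTop (𝓝 0)) :
    IsSlowProfile fun k => (f k).toNNReal where
  monotone _ _ hij := Real.toNNReal_mono (hf hij)
  map_zero := by simp [h0]
  tendsto_dist := by
    have hnonneg (k : ℕ) : 0 ≤ f k := h0 ▸ hf k.zero_le
    refine hinc.congr fun k => ?_
    rw [NNReal.dist_eq, Real.coe_toNNReal _ (hnonneg _), Real.coe_toNNReal _ (hnonneg _),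
      abs_of_nonneg (sub_nonneg.2 (hf k.le_succ))]

lemma not_summable_exp_of_nonneg {f : ℕ → ℝ} (hf : ∀ k, 0 ≤ f k) :
    ¬ Summable fun k => Real.exp (f k) := fun h =>
  have hle : (1 : ℝ) ≤ 0 := ge_of_tendsto' h.tendsto_atTop_zero fun k => Real.one_le_exp (hf k)
  absurd hle (by norm_num)

lemma log_sub_log_le {a b : ℝ} (ha : 0 < a) (hb : 0 < b) :
    Real.log b - Real.log a ≤ (b - a) / a := by
  rw [← Real.log_div hb.ne' ha.ne', sub_div, div_self ha.ne']
  exact Real.log_le_sub_one_of_pos (by positivity)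

/-- The profile `k ↦ log (k + 1)`, whose weights `exp (-s * log (k + 1))` are summable exactly for
`1 < s`. -/
noncomputable def logProfile (k : ℕ) : ℝ := Real.log (k + 1)

lemma logProfile_nonneg (k : ℕ) : 0 ≤ logProfile k := Real.log_nonneg (by simp)

lemma monotone_logProfile : Monotone logProfile := fun i j hij =>
  Real.log_le_log (by positivity) (by gcongr)

lemma tendsto_logProfile_succ_sub :
    Tendsto (fun k => logProfile (k + 1) - logProfile k) atTop (𝓝 0) := by
  refine squeeze_zero (fun k => sub_nonneg.2 (monotone_logProfile k.le_succ)) (fun k => ?_)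
    tendsto_one_div_add_atTop_nhds_zero_nat
  refine (log_sub_log_le (by positivity) (by positivity)).trans_eq ?_
  simp

lemma exp_neg_mul_logProfile (s : ℝ) (k : ℕ) :
    Real.exp (-s * logProfile k) = 1 / ((k + 1 : ℕ) : ℝ) ^ s := by
  rw [Real.rpow_def_of_pos (by positivity), one_div, ← Real.exp_neg, logProfile]
  push_cast
  ring_nf

lemma summable_exp_neg_mul_logProfile_iff (s : ℝ) :
    Summable (fun k => Real.exp (-s * logProfile k)) ↔ 1 < s := by
  simp_rw [exp_neg_mul_logProfile]
  rw [summable_nat_add_iff (f := fun k : ℕ => 1 / (k : ℝ) ^ s) 1]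
  exact Real.summable_one_div_nat_rpow

/-- The profile `logProfile` with a doubly logarithmic correction that makes the weights
`exp (-s * logLogProfile k)` summable at the critical exponent `s = 1` as well. -/
noncomputable def logLogProfile (k : ℕ) : ℝ :=
  logProfile k + 2 * Real.log (1 + logProfile k)

lemma logLogProfile_nonneg (k : ℕ) : 0 ≤ logLogProfile k := by
  have hlog := logProfile_nonneg k
  have hloglog : 0 ≤ Real.log (1 + logProfile k) := Real.log_nonneg (by linarith)
  unfold logLogProfile
  positivity

lemma monotone_logLogProfile : Monotone logLogProfile := fun i j hij => by
  have hlog := monotone_logProfile hij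
  have hpos := logProfile_nonneg i
  unfold logLogProfile
  gcongr

lemma tendsto_logLogProfile_succ_sub :
    Tendsto (fun k => logLogProfile (k + 1) - logLogProfile k) atTop (𝓝 0) := by
  refine squeeze_zero (g := fun k => 3 * (logProfile (k + 1) - logProfile k))
    (fun k => sub_nonneg.2 (monotone_logLogProfile k.le_succ)) (fun k => ?_)
    (by simpa using tendsto_logProfile_succ_sub.const_mul 3)
  have hk := logProfile_nonneg k
  have hk' := logProfile_nonneg (k + 1)
  have hloglog : Real.log (1 + logProfile (k + 1)) - Real.log (1 + logProfile k) ≤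
      logProfile (k + 1) - logProfile k := by
    refine (log_sub_log_le (by positivity) (by positivity)).trans ?_
    rw [add_sub_add_left_eq_sub]
    exact div_le_self (sub_nonneg.2 (monotone_logProfile k.le_succ)) (by linarith)
  unfold logLogProfile
  linarith

lemma summable_one_div_nat_mul_one_add_log_sq :
    Summable fun k : ℕ => 1 / ((k : ℝ) * (1 + Real.log k) ^ 2) := by
  rw [← summable_condensed_iff_of_nonneg (fun k => by positivity) fun i j hi hij => ?_]
  · have hcondensed (k : ℕ) :
        (2 : ℝ) ^ k * (1 / (((2 ^ k : ℕ) : ℝ) * (1 + Real.log (2 ^ k : ℕ)) ^ 2)) =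
          1 / (1 + k * Real.log 2) ^ 2 := by
      push_cast
      rw [Real.log_pow]
      field_simp
    simp_rw [hcondensed]
    refine .of_nonneg_of_le (fun k => by positivity) (fun k => ?_) <| (summable_nat_add_iff 1).2
      (Real.summable_one_div_nat_pow (p := 2).2 one_lt_two) |>.mul_left 4
    have hlin : (k : ℝ) + 1 ≤ 2 * (1 + k * Real.log 2) := by
      nlinarith [Real.log_two_gt_d9, k.cast_nonneg (α := ℝ)]
    rw [mul_one_div, div_le_div_iff₀ (by positivity) (by positivity)]
    push_cast
    nlinarith
  · have : (0 : ℝ) < i := Nat.cast_pos.2 hi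
    gcongr

lemma summable_exp_neg_logLogProfile : Summable fun k => Real.exp (-logLogProfile k) := by
  refine ((summable_nat_add_iff 1).2 summable_one_div_nat_mul_one_add_log_sq).congr fun k => ?_
  have hpos : 0 < 1 + logProfile k := by linarith [logProfile_nonneg k]
  rw [logLogProfile, Real.exp_neg, Real.exp_add, two_mul, Real.exp_add, Real.exp_log hpos,
    logProfile, Real.exp_log (by positivity)]
  push_cast
  ring

lemma logLogProfile_le {ε : ℝ} (hε : 0 < ε) (hε' : ε ≤ 1) (k : ℕ) :
    logLogProfile k ≤ (1 + 2 * ε) * logProfile k - 2 * Real.log ε := by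
  have hk := logProfile_nonneg k
  have hloglog : Real.log ε + Real.log (1 + logProfile k) ≤ ε * logProfile k := by
    rw [← Real.log_mul (by positivity) (by positivity)]
    refine (Real.log_le_sub_one_of_pos (by positivity)).trans ?_
    linarith
  unfold logLogProfile
  linarith

lemma summable_exp_neg_mul_logLogProfile_iff (s : ℝ) :
    Summable (fun k => Real.exp (-s * logLogProfile k)) ↔ 1 ≤ s := by
  refine ⟨fun h => ?_, fun hs => ?_⟩
  · by_contra! hs
    rcases le_or_gt s 0 with hs0 | hs0
    · exact not_summable_exp_of_nonneg
        (fun k => mul_nonneg (neg_nonneg.2 hs0) (logLogProfile_nonneg k)) h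
    set ε := (1 - s) / 2 with hε
    have hexponent : s * (1 + 2 * ε) ≤ 1 := by nlinarith
    refine lt_irrefl 1 ((summable_exp_neg_mul_logProfile_iff 1).1 <|
      .of_nonneg_of_le (fun k => (Real.exp_pos _).le) (fun k => ?_)
        (h.mul_left (Real.exp (-(2 * s * Real.log ε)))))
    rw [← Real.exp_add, Real.exp_le_exp]
    nlinarith [mul_le_mul_of_nonneg_left
      (logLogProfile_le (ε := ε) (by linarith) (by linarith) k) hs0.le,
      mul_le_mul_of_nonneg_right hexponent (logProfile_nonneg k)]
  · refine .of_nonneg_of_le (fun k => (Real.exp_pos _).le) (fun k => ?_)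
      summable_exp_neg_logLogProfile
    rw [Real.exp_le_exp, neg_mul, neg_le_neg_iff]
    exact le_mul_of_one_le_left (logLogProfile_nonneg k) hs

lemma exists_isSlowProfile_rescale {f : ℕ → ℝ} (hf : Monotone f) (h0 : f 0 = 0)
    (hinc : Tendsto (fun k => f (k + 1) - f k) atTop (𝓝 0)) {b : ℝ} (hb : b < 0) :
    ∃ g : ℕ → ℝ≥0, IsSlowProfile g ∧ ∀ β k, β * g k = -(β / b) * f k := by
  have hb' : 0 ≤ (-b)⁻¹ := by simpa using hb.le
  refine ⟨fun k => ((-b)⁻¹ * f k).toNNReal, isSlowProfile_toNNReal (hf.const_mul hb') (by simp [h0])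
    (by simpa [mul_sub] using hinc.const_mul (-b)⁻¹), fun β k => ?_⟩
  rw [Real.coe_toNNReal _ (mul_nonneg hb' (h0 ▸ hf k.zero_le))]
  have := hb.ne
  field_simp

theorem exists_isSlowProfile_summable_iff {J : Set ℝ}
    (hJ : ∃ b < 0, J = Set.Iic b ∨ J = Set.Iio b) :
    ∃ g : ℕ → ℝ≥0, IsSlowProfile g ∧
      ∀ β : ℝ, Summable (fun k => Real.exp (β * g k)) ↔ β ∈ J := by
  obtain ⟨b, hb, rfl | rfl⟩ := hJ
  · obtain ⟨g, hg, hgf⟩ := exists_isSlowProfile_rescale monotone_logLogProfile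
      (by simp [logLogProfile, logProfile]) tendsto_logLogProfile_succ_sub hb
    refine ⟨g, hg, fun β => ?_⟩
    simp_rw [hgf, summable_exp_neg_mul_logLogProfile_iff, one_le_div_of_neg hb, Set.mem_Iic]
  · obtain ⟨g, hg, hgf⟩ := exists_isSlowProfile_rescale monotone_logProfile
      (by simp [logProfile]) tendsto_logProfile_succ_sub hb
    refine ⟨g, hg, fun β => ?_⟩
    simp_rw [hgf, summable_exp_neg_mul_logProfile_iff, one_lt_div_of_neg hb, Set.mem_Iio]

/-! ### Conformal measures on an orbit -/

section orbit

variable {X : Type*} [TopologicalSpace X] (φ : X ≃ₜ X)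

lemma coe_homeomorph_pow (n : ℕ) : ⇑(φ ^ n) = φ^[n] :=
  hom_coe_pow (fun ψ : X ≃ₜ X => (ψ : X → X)) rfl (fun _ _ => rfl) φ n

lemma zOrbit_eq_range (x : X) : zOrbit φ x = Set.range fun k : ℤ => (φ ^ k) x := by
  have hsymm (n : ℕ) : φ.symm^[n] x = (φ ^ (-n : ℤ)) x := by
    rw [zpow_neg, zpow_natCast, ← inv_pow, coe_homeomorph_pow]
    rfl
  ext y
  simp only [zOrbit, hsymm, ← coe_homeomorph_pow, ← zpow_natCast, Set.mem_ofPred_eq, Set.mem_range,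
    eq_comm (a := y)]
  constructor
  · rintro ⟨n, h | h⟩
    exacts [⟨n, h⟩, ⟨-n, h⟩]
  · rintro ⟨k, h⟩
    obtain ⟨n, rfl | rfl⟩ := k.eq_nat_or_neg
    exacts [⟨n, .inl h⟩, ⟨n, .inr h⟩]

variable {φ}

lemma homeomorph_zpow_add_one_apply (k : ℤ) (y : X) : (φ ^ (k + 1)) y = φ ((φ ^ k) y) := by
  rw [zpow_add_one, (Commute.self_zpow φ k).symm.eq]
  rfl

lemma injective_zpow_apply {x : X} (hx : ∀ n : ℕ, 1 ≤ n → φ^[n] x ≠ x) :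
    Function.Injective fun k : ℤ => (φ ^ k) x := by
  refine .of_lt_imp_ne fun i j hij heq => hx (j - i).toNat (by omega) ?_
  have : (φ ^ i) ((φ ^ (j - i)) x) = (φ ^ i) x := by
    rw [← Homeomorph.mul_apply, ← zpow_add, add_sub_cancel]
    exact heq.symm
  rw [← coe_homeomorph_pow, ← zpow_natCast, Int.toNat_of_nonneg (by omega)]
  exact (φ ^ i).injective this

lemma injective_prod_zpow_apply {ι : Type*} {x : ι → X}
    (hnonper : ∀ p, ∀ n : ℕ, 1 ≤ n → φ^[n] (x p) ≠ x p)
    (hdisj : ∀ p p', p ≠ p' → Disjoint (zOrbit φ (x p)) (zOrbit φ (x p'))) :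
    Function.Injective fun a : ι × ℤ => (φ ^ a.2) (x a.1) := by
  rintro ⟨p, i⟩ ⟨p', j⟩ heq
  obtain rfl : p = p' := by
    by_contra hne
    have := hdisj p p' hne
    simp only [zOrbit_eq_range] at this
    exact this.ne_of_mem ⟨i, rfl⟩ ⟨j, rfl⟩ heq
  exact Prod.ext rfl (injective_zpow_apply (hnonper p) heq)

/-- `H` is a potential of `F` along the orbit of `x`: its increments are the values of `F`. The
weights `exp (β * H k)` are then those of an `exp (β * F)`-conformal measure on the orbit. -/
def IsOrbitPotential (φ : X ≃ₜ X) (F : X → ℝ) (x : X) (H : ℤ → ℝ) : Prop :=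
  ∀ k, H (k + 1) = H k + F ((φ ^ k) x)

/-- The weight of `φ ^ k x` in the unnormalized conformal measure on the orbit of `x` with
potential `H`. -/
noncomputable def orbitWeight (β : ℝ) (H : ℤ → ℝ) (k : ℤ) : ℝ≥0∞ :=
  ENNReal.ofReal (Real.exp (β * H k))

variable {F : X → ℝ} {x : X} {H : ℤ → ℝ} {β : ℝ}

lemma orbitWeight_ne_zero (k : ℤ) : orbitWeight β H k ≠ 0 := by
  simp [orbitWeight, Real.exp_pos]

lemma orbitWeight_ne_top (k : ℤ) : orbitWeight β H k ≠ ⊤ := ENNReal.ofReal_ne_top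

lemma IsOrbitPotential.orbitWeight_add_one (hH : IsOrbitPotential φ F x H) (k : ℤ) :
    orbitWeight β H (k + 1) =
      orbitWeight β H k * ENNReal.ofReal (Real.exp (β * F ((φ ^ k) x))) := by
  rw [orbitWeight, orbitWeight, ← ENNReal.ofReal_mul (Real.exp_pos _).le, ← Real.exp_add, hH,
    mul_add]

variable [MeasurableSpace X]

/-- The unnormalized measure on the orbit of `x` that gives `φ ^ k x` mass `orbitWeight β H k`. -/
noncomputable def orbitMeasure (φ : X ≃ₜ X) (x : X) (β : ℝ) (H : ℤ → ℝ) : Measure X :=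
  .sum fun k => orbitWeight β H k • .dirac ((φ ^ k) x)

lemma orbitMeasure_apply {B : Set X} (hB : MeasurableSet B) :
    orbitMeasure φ x β H B = ∑' k, orbitWeight β H k * B.indicator 1 ((φ ^ k) x) := by
  simp [orbitMeasure, Measure.sum_apply _ hB, Measure.dirac_apply' _ hB]

lemma lintegral_orbitMeasure {f : X → ℝ≥0∞} (hf : Measurable f) :
    ∫⁻ y, f y ∂orbitMeasure φ x β H = ∑' k, orbitWeight β H k * f ((φ ^ k) x) := by
  simp [orbitMeasure, lintegral_sum_measure, lintegral_dirac' _ hf]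

lemma IsOrbitPotential.orbitMeasure_image [BorelSpace X]
    (hH : IsOrbitPotential φ F x H) (hF : Measurable F) {B : Set X} (hB : MeasurableSet B) :
    orbitMeasure φ x β H (φ '' B) =
      ∫⁻ y in B, ENNReal.ofReal (Real.exp (β * F y)) ∂orbitMeasure φ x β H := by
  have hdensity : Measurable fun y => ENNReal.ofReal (Real.exp (β * F y)) := by fun_prop
  rw [orbitMeasure_apply (φ.measurableEmbedding.measurableSet_image.2 hB), ← lintegral_indicator hB,
    lintegral_orbitMeasure (hdensity.indicator hB), ← (Equiv.addRight (1 : ℤ)).tsum_eq]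
  refine tsum_congr fun k => ?_
  rw [Equiv.coe_addRight, homeomorph_zpow_add_one_apply, hH.orbitWeight_add_one, mul_assoc]
  congr 1
  by_cases hk : (φ ^ k) x ∈ B
  · simp [hk]
  · simp [hk]

variable [MeasurableSingletonClass X]

lemma measurableSet_zOrbit : MeasurableSet (zOrbit φ x) := by
  rw [zOrbit_eq_range]
  exact (Set.countable_range _).measurableSet

lemma orbitMeasure_compl_zOrbit : orbitMeasure φ x β H (zOrbit φ x)ᶜ = 0 := by
  rw [orbitMeasure_apply measurableSet_zOrbit.compl]
  simp [zOrbit_eq_range]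

lemma IsOrbitPotential.measure_singleton (hH : IsOrbitPotential φ F x H) {m : Measure X}
    (hm : IsConformalMeasure φ F β m) :
    ∃ a, ∀ k : ℤ, m {(φ ^ k) x} = orbitWeight β H k * a := by
  have hstep (k : ℤ) :
      m {(φ ^ (k + 1)) x} = ENNReal.ofReal (Real.exp (β * F ((φ ^ k) x))) * m {(φ ^ k) x} := by
    rw [homeomorph_zpow_add_one_apply, ← Set.image_singleton, hm.2 _ (measurableSet_singleton _),
      lintegral_singleton]
  have hperiodic : Function.Periodic (fun k : ℤ => (orbitWeight β H k)⁻¹ * m {(φ ^ k) x}) 1 := by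
    intro k
    have hF0 : ENNReal.ofReal (Real.exp (β * F ((φ ^ k) x))) ≠ 0 := by simp [Real.exp_pos]
    simp only [hH.orbitWeight_add_one, hstep]
    rw [ENNReal.mul_inv (.inr ENNReal.ofReal_ne_top) (.inr hF0), mul_assoc,
      ENNReal.inv_mul_cancel_left hF0 ENNReal.ofReal_ne_top]
  refine ⟨(orbitWeight β H 0)⁻¹ * m {(φ ^ (0 : ℤ)) x}, fun k => ?_⟩
  have hconst := hperiodic.int_mul_eq k
  simp only [Int.cast_id, mul_one] at hconst
  rw [← hconst, ENNReal.mul_inv_cancel_left (orbitWeight_ne_zero k) (orbitWeight_ne_top k)]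

lemma IsOrbitPotential.tsum_orbitWeight_ne_top (hH : IsOrbitPotential φ F x H)
    (hinj : Function.Injective fun k : ℤ => (φ ^ k) x) {m : Measure X}
    (hm : IsConformalMeasure φ F β m) (hx : m (zOrbit φ x)ᶜ = 0) :
    ∑' k, orbitWeight β H k ≠ ⊤ := by
  obtain ⟨a, ha⟩ := hH.measure_singleton hm
  have := hm.1
  have htotal : (∑' k, orbitWeight β H k) * a = 1 := calc
    _ = ∑' k : ℤ, m {(φ ^ k) x} := by simp_rw [ha, ENNReal.tsum_mul_right]
    _ = m (zOrbit φ x) := by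
      rw [zOrbit_eq_range, ← Set.iUnion_singleton_eq_range, measure_iUnion
        (fun i j hij => Set.disjoint_singleton.2 (hinj.ne hij)) fun k => measurableSet_singleton _]
    _ = 1 := (prob_compl_eq_zero_iff measurableSet_zOrbit).1 hx
  intro htop
  rw [htop] at htotal
  rcases eq_or_ne a 0 with rfl | ha0
  · simp at htotal
  · simp [ENNReal.top_mul ha0] at htotal

variable [BorelSpace X]

lemma IsOrbitPotential.exists_isConformalMeasure (hH : IsOrbitPotential φ F x H)
    (hF : Measurable F) (hsum : ∑' k, orbitWeight β H k ≠ ⊤) :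
    ∃ m : Measure X, IsConformalMeasure φ F β m ∧ m (zOrbit φ x)ᶜ = 0 := by
  have hpos : ∑' k, orbitWeight β H k ≠ 0 := fun h =>
    orbitWeight_ne_zero 0 (ENNReal.tsum_eq_zero.1 h 0)
  refine ⟨(∑' k, orbitWeight β H k)⁻¹ • orbitMeasure φ x β H, ⟨⟨?_⟩, fun B hB => ?_⟩, ?_⟩
  · simp [orbitMeasure_apply MeasurableSet.univ, ENNReal.inv_mul_cancel hpos hsum]
  · rw [Measure.restrict_smul, lintegral_smul_measure, Measure.smul_apply,
      hH.orbitMeasure_image hF hB]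
  · rw [Measure.smul_apply, orbitMeasure_compl_zOrbit, smul_zero]

theorem IsOrbitPotential.exists_isConformalMeasure_iff (hH : IsOrbitPotential φ F x H)
    (hF : Measurable F) (hinj : Function.Injective fun k : ℤ => (φ ^ k) x) :
    (∃ m : Measure X, IsConformalMeasure φ F β m ∧ m (zOrbit φ x)ᶜ = 0) ↔
      ∑' k, orbitWeight β H k ≠ ⊤ :=
  ⟨fun ⟨_, hm, hx⟩ => hH.tsum_orbitWeight_ne_top hinj hm hx, hH.exists_isConformalMeasure hF⟩

end orbit

/-! ### Orbit weights of sparse majorants -/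

/-- `H` dominates the profile `g` on both sides of the origin, and on the positive half-line
agrees with it outside a union of increasingly sparse sets. -/
structure IsSparseMajorant (g : ℕ → ℝ≥0) (H : ℤ → ℝ) : Prop where
  le : ∀ k, g k.natAbs ≤ H k
  eq_off_sparse : ∃ B : ℕ → Set ℕ, (∀ n, IsSparse (2 ^ (n + 2)) (B n)) ∧
    ∀ k ∉ ⋃ n, B n, H k = g k

namespace IsSparseMajorant

variable {g : ℕ → ℝ≥0} {H : ℤ → ℝ} {β : ℝ}

lemma tsum_orbitWeight_eq_top (hH : IsSparseMajorant g H) (hβ : 0 ≤ β) :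
    ∑' k, orbitWeight β H k = ⊤ := by
  have hone (k : ℤ) : 1 ≤ orbitWeight β H k := by
    rw [orbitWeight, ENNReal.one_le_ofReal, Real.one_le_exp_iff]
    exact mul_nonneg hβ ((g _).2.trans (hH.le k))
  exact top_unique <| (ENNReal.tsum_const_eq_top_of_ne_zero one_ne_zero).symm.le.trans
    (ENNReal.tsum_le_tsum hone)

lemma tsum_orbitWeight_ne_top (hH : IsSparseMajorant g H) (hβ : β ≤ 0)
    (hg : Summable fun k => Real.exp (β * g k)) : ∑' k, orbitWeight β H k ≠ ⊤ := by
  have hsum : Summable fun k : ℤ => Real.exp (β * g k.natAbs) :=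
    .of_nat_of_neg (by simpa using hg) (by simpa using hg)
  refine ne_top_of_le_ne_top hsum.tsum_ofReal_ne_top (ENNReal.tsum_le_tsum fun k => ?_)
  exact ENNReal.ofReal_le_ofReal (Real.exp_le_exp.2 (mul_le_mul_of_nonpos_left (hH.le k) hβ))

lemma summable_exp (hH : IsSparseMajorant g H) (hg : Monotone g) (hβ : β ≤ 0)
    (htop : ∑' k, orbitWeight β H k ≠ ⊤) : Summable fun k => Real.exp (β * g k) := by
  obtain ⟨B, hB, hHB⟩ := hH.eq_off_sparse
  let e : ℕ → ℝ≥0∞ := fun k => ENNReal.ofReal (Real.exp (β * g k))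
  have he : Antitone e := fun i j hij =>
    ENNReal.ofReal_le_ofReal (Real.exp_le_exp.2 (mul_le_mul_of_nonpos_left (hg hij) hβ))
  have hle : ∑' k, e k ≤ 2 * ∑' k, orbitWeight β H k := calc
    ∑' k, e k ≤ 2 * ∑' k : ↥(⋃ n, B n)ᶜ, e k :=
      tsum_le_two_mul_tsum_compl_of_isSparse hB he fun k => ENNReal.ofReal_ne_top
    _ = 2 * ∑' k : ↥(⋃ n, B n)ᶜ, orbitWeight β H (k : ℕ) := by
      simp only [orbitWeight, e, fun k : ↥(⋃ n, B n)ᶜ => hHB k k.2]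
    _ ≤ 2 * ∑' k, orbitWeight β H k := by
      gcongr
      exact ENNReal.tsum_comp_le_tsum_of_injective
        (Nat.cast_injective.comp Subtype.val_injective) (orbitWeight β H)
  have hsum := ENNReal.summable_toReal (ne_top_of_le_ne_top (ENNReal.mul_ne_top (by simp) htop) hle)
  simpa only [e, ENNReal.toReal_ofReal (Real.exp_pos _).le] using hsum

theorem tsum_orbitWeight_ne_top_iff (hH : IsSparseMajorant g H) (hg : Monotone g) (β : ℝ) :
    ∑' k, orbitWeight β H k ≠ ⊤ ↔ Summable fun k => Real.exp (β * g k) := by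
  rcases le_total β 0 with hβ | hβ
  · exact ⟨hH.summable_exp hg hβ, hH.tsum_orbitWeight_ne_top hβ⟩
  · exact iff_of_false (not_not.2 (hH.tsum_orbitWeight_eq_top hβ))
      (not_summable_exp_of_nonneg fun k => mul_nonneg hβ (g k).2)

end IsSparseMajorant

/-! ### Bumps along orbits -/

section tower

variable {X ι : Type*} [TopologicalSpace X] {φ : X ≃ₜ X} {x : ι → X}

lemma exists_isOpen_separated [T2Space X] [Finite ι]
    (hinj : Function.Injective fun a : ι × ℤ => (φ ^ a.2) (x a.1)) (R : ℤ) :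
    ∃ U : ι → Set X, (∀ p, IsOpen (U p)) ∧ (∀ p, x p ∈ U p) ∧
      ∀ p p' i y, |i| ≤ R → y ∈ U p → (φ ^ i) y ∈ U p' → p = p' ∧ i = 0 := by
  obtain ⟨W, hW, hdisj⟩ := ((Set.finite_univ.prod (Set.finite_Icc (-R) R)).image
    fun a : ι × ℤ => (φ ^ a.2) (x a.1)).t2_separation
  refine ⟨fun p => ⋂ i ∈ Set.Icc (-R) R, (φ ^ i) ⁻¹' W ((φ ^ i) (x p)), fun p => ?_, fun p => ?_,
    fun p p' i y hi hy hy' => ?_⟩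
  · exact (Set.finite_Icc _ _).isOpen_biInter fun i _ => (hW _).2.preimage (φ ^ i).continuous
  · exact Set.mem_iInter₂.2 fun i _ => (hW _).1
  · have hi0 : (0 : ℤ) ∈ Set.Icc (-R) R := by
      have := (abs_nonneg i).trans hi
      exact ⟨by linarith, this⟩
    have hmem : (φ ^ i) y ∈ W ((φ ^ i) (x p)) := Set.mem_iInter₂.1 hy i (abs_le.1 hi)
    have hmem' : (φ ^ i) y ∈ W ((φ ^ (0 : ℤ)) (x p')) := Set.mem_iInter₂.1 hy' 0 hi0
    have heq := hdisj.elim_set (Set.mem_image_of_mem _ ⟨Set.mem_univ (p, i).1, abs_le.1 hi⟩)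
      (Set.mem_image_of_mem _ ⟨Set.mem_univ (p', (0 : ℤ)).1, hi0⟩) _ hmem hmem'
    exact Prod.ext_iff.1 (hinj heq)

/-- Bump functions at the points `x p` whose supports do not meet one another, nor themselves,
within `R` iterations of `φ`. -/
structure IsBumpFamily (φ : X ≃ₜ X) (x : ι → X) (R : ℤ) (u : ι → X → ℝ≥0) : Prop where
  continuous : ∀ p, Continuous (u p)
  le_one : ∀ p y, u p y ≤ 1
  apply_self : ∀ p, u p (x p) = 1
  separated : ∀ p p' i y, |i| ≤ R → u p y ≠ 0 → u p' ((φ ^ i) y) ≠ 0 → p = p' ∧ i = 0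

lemma exists_isBumpFamily [T35Space X] [Finite ι]
    (hinj : Function.Injective fun a : ι × ℤ => (φ ^ a.2) (x a.1)) (R : ℤ) :
    ∃ u, IsBumpFamily φ x R u := by
  obtain ⟨U, hU, hxU, hsep⟩ := exists_isOpen_separated hinj R
  choose f hf hfx hfU using fun p =>
    CompletelyRegularSpace.completely_regular_isOpen (x p) (U p) (hU p) (hxU p)
  refine ⟨fun p y => 1 - unitInterval.toNNReal (f p y), fun p => ?_, fun p y => tsub_le_self,
    fun p => by simp [hfx], fun p p' i y hi hy hyi => hsep p p' i y hi ?_ ?_⟩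
  · exact continuous_const.sub (unitInterval.toNNReal_continuous.comp (hf p))
  · by_contra hyU
    simp [hfU p hyU] at hy
  · by_contra hyU
    simp [hfU p' hyU] at hyi

/-- The times at which the orbit of `y` visits the support of one of the bumps. -/
def returnTimes (φ : X ≃ₜ X) (u : ι → X → ℝ≥0) (y : X) : Set ℤ :=
  {v | ∃ p, u p ((φ ^ v) y) ≠ 0}

namespace IsBumpFamily

variable {R : ℤ} {u : ι → X → ℝ≥0}

lemma zero_mem_returnTimes (hu : IsBumpFamily φ x R u) (p : ι) :
    0 ∈ returnTimes φ u (x p) :=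
  ⟨p, by simp [hu.apply_self]⟩

lemma returnTimes_separated (hu : IsBumpFamily φ x R u) {y : X} {v w : ℤ}
    (hv : v ∈ returnTimes φ u y) (hw : w ∈ returnTimes φ u y) (hvw : |v - w| ≤ R) : v = w := by
  obtain ⟨p, hp⟩ := hv
  obtain ⟨p', hp'⟩ := hw
  rw [← sub_add_cancel v w, zpow_add, Homeomorph.mul_apply] at hp
  exact sub_eq_zero.1 (hu.separated p' p (v - w) _ hvw hp' hp).2

end IsBumpFamily

/-- Carries the bumps `u` along the orbits with heights `c`, over `N` iterations in each direction.
The heights are meant to vanish beyond time `N`. -/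
noncomputable def towerSup [Fintype ι] (φ : X ≃ₜ X) (u : ι → X → ℝ≥0) (c : ι → ℤ → ℝ≥0) (N : ℕ)
    (y : X) : ℝ≥0 :=
  (Finset.univ ×ˢ Finset.Icc (-N : ℤ) N).sup fun a => c a.1 a.2 * u a.1 ((φ ^ (-a.2)) y)

section towerSup

variable [Fintype ι] {u : ι → X → ℝ≥0} {c : ι → ℤ → ℝ≥0} {N : ℕ}

lemma continuous_towerSup (hu : ∀ p, Continuous (u p)) : Continuous (towerSup φ u c N) :=
  Continuous.finset_sup_apply fun a _ =>
    continuous_const.mul ((hu a.1).comp (φ ^ (-a.2)).continuous)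

lemma towerSup_le_sup (hu : ∀ p y, u p y ≤ 1) (y : X) :
    towerSup φ u c N y ≤ (Finset.univ ×ˢ Finset.Icc (-N : ℤ) N).sup fun a => c a.1 a.2 :=
  Finset.sup_mono_fun fun a _ => mul_le_of_le_one_right zero_le (hu a.1 _)

lemma towerSup_le_iff (hc : ∀ p, ∀ k : ℤ, N < |k| → c p k = 0) {y : X} {b : ℝ≥0} :
    towerSup φ u c N y ≤ b ↔ ∀ p k, c p k * u p ((φ ^ (-k)) y) ≤ b := by
  simp only [towerSup, Finset.sup_le_iff, Prod.forall, Finset.mem_product, Finset.mem_univ,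
    true_and, Finset.mem_Icc, ← abs_le]
  refine forall₂_congr fun p k => ⟨fun h => ?_, fun h _ => h⟩
  rcases le_or_gt |k| N with hk | hk
  · exact h hk
  · simp [hc p k hk]

lemma le_towerSup (hc : ∀ p, ∀ k : ℤ, N < |k| → c p k = 0) (p : ι) (k : ℤ) (y : X) :
    c p k * u p ((φ ^ (-k)) y) ≤ towerSup φ u c N y :=
  (towerSup_le_iff hc).1 le_rfl p k

-- Passing from `y` to `φ y` shifts the heights by one.
lemma dist_towerSup_apply_le (hc : ∀ p, ∀ k : ℤ, N < |k| → c p k = 0) (hu : ∀ p y, u p y ≤ 1)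
    {d : ℝ≥0} (hd : ∀ p k, dist (c p (k + 1)) (c p k) ≤ d) (y : X) :
    dist (towerSup φ u c N (φ y)) (towerSup φ u c N y) ≤ d := by
  have hd' (p : ι) (k : ℤ) : c p (k + 1) ≤ c p k + d ∧ c p k ≤ c p (k + 1) + d := by
    have := abs_le.1 ((NNReal.dist_eq _ _).symm.trans_le (hd p k))
    constructor <;> rw [← NNReal.coe_le_coe] <;> push_cast <;> linarith
  have hmul {a a' t b : ℝ≥0} (ha : a ≤ a' + d) (ht : t ≤ 1) (hb : a' * t ≤ b) : a * t ≤ b + d :=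
    calc a * t ≤ (a' + d) * t := by gcongr
      _ = a' * t + d * t := add_mul _ _ _
      _ ≤ b + d := add_le_add hb (mul_le_of_le_one_right zero_le ht)
  have hshift (k : ℤ) : (φ ^ (-(k + 1))) (φ y) = (φ ^ (-k)) y := by
    rw [← Homeomorph.mul_apply, ← zpow_add_one, neg_add, neg_add_cancel_right]
  have hle : towerSup φ u c N (φ y) ≤ towerSup φ u c N y + d := by
    refine (towerSup_le_iff hc).2 fun p k => ?_
    obtain ⟨k, rfl⟩ : ∃ j, k = j + 1 := ⟨k - 1, by ring⟩
    rw [hshift]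
    exact hmul (hd' p k).1 (hu _ _) (le_towerSup hc p k y)
  have hge : towerSup φ u c N y ≤ towerSup φ u c N (φ y) + d := by
    refine (towerSup_le_iff hc).2 fun p k => ?_
    rw [← hshift]
    exact hmul (hd' p k).2 (hu _ _) (le_towerSup hc p (k + 1) (φ y))
  rw [NNReal.dist_eq, abs_le]
  constructor <;> linarith [NNReal.coe_le_coe.2 hle, NNReal.coe_le_coe.2 hge, NNReal.coe_add
    (towerSup φ u c N y) d, NNReal.coe_add (towerSup φ u c N (φ y)) d]

variable {R : ℤ}

lemma IsBumpFamily.height_le_towerSup (hu : IsBumpFamily φ x R u)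
    (hc : ∀ p, ∀ k : ℤ, N < |k| → c p k = 0) (p : ι) (k : ℤ) :
    c p k ≤ towerSup φ u c N ((φ ^ k) (x p)) := by
  have := le_towerSup (φ := φ) (u := u) hc p k ((φ ^ k) (x p))
  rwa [← Homeomorph.mul_apply, ← zpow_add, neg_add_cancel, zpow_zero, Homeomorph.one_apply,
    hu.apply_self, mul_one] at this

lemma IsBumpFamily.exists_returnTimes_of_towerSup_ne (hu : IsBumpFamily φ x R u) (hR : 0 ≤ R)
    (hc : ∀ p, ∀ k : ℤ, N < |k| → c p k = 0) {p : ι} {k : ℤ}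
    (hk : towerSup φ u c N ((φ ^ k) (x p)) ≠ c p k) :
    ∃ v ∈ returnTimes φ u (x p), v ≠ 0 ∧ |k - v| ≤ N := by
  contrapose! hk
  refine le_antisymm ((towerSup_le_iff hc).2 fun p' j => ?_) (hu.height_le_towerSup hc p k)
  rw [← Homeomorph.mul_apply, ← zpow_add]
  by_cases hvisit : u p' ((φ ^ (-j + k)) (x p)) = 0
  · simp [hvisit]
  rcases eq_or_ne (-j + k) 0 with hjk | hjk
  · obtain rfl : j = k := by omega
    obtain ⟨rfl, -⟩ := hu.separated p p' 0 (x p) (by simpa using hR) (by simp [hu.apply_self])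
      (hjk ▸ hvisit)
    exact mul_le_of_le_one_right zero_le (hu.le_one _ _)
  · have hj := hk _ ⟨p', hvisit⟩ hjk
    rw [show k - (-j + k) = j by ring] at hj
    simp [hc p' j hj]

end towerSup

/-- `h` realizes the heights `c` along the orbits of the points `x p` up to errors that are
nonnegative, absent from the first `Q` iterations, and `Q`-sparse, while it varies by at most `d`
under `φ`. -/
structure IsStage (φ : X ≃ₜ X) (x : ι → X) (c : ι → ℕ → ℝ≥0) (d : ℝ≥0) (Q : ℕ) (h : X →ᵇ ℝ) :
    Prop where
  dist_le : ∀ y, dist (h (φ y)) (h y) ≤ d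
  le : ∀ p (k : ℤ), c p k.natAbs ≤ h ((φ ^ k) (x p))
  eq : ∀ p (k : ℤ), k.natAbs ≤ Q → h ((φ ^ k) (x p)) = c p k.natAbs
  isSparse : ∀ p, IsSparse Q {k : ℕ | h ((φ ^ (k : ℤ)) (x p)) ≠ c p k}

lemma dist_natAbs_add_one_le {c : ℕ → ℝ≥0} {d : ℝ} (hc : ∀ k, dist (c (k + 1)) (c k) ≤ d) (k : ℤ) :
    dist (c (k + 1).natAbs) (c k.natAbs) ≤ d := by
  rcases le_or_gt 0 k with hk | hk
  · rw [show (k + 1).natAbs = k.natAbs + 1 by omega]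
    exact hc _
  · rw [show k.natAbs = (k + 1).natAbs + 1 by omega, dist_comm]
    exact hc _

theorem exists_isStage [T35Space X] [Finite ι]
    (hinj : Function.Injective fun a : ι × ℤ => (φ ^ a.2) (x a.1)) {c : ι → ℕ → ℝ≥0} {d : ℝ≥0}
    (hc : ∀ p, ∀ᶠ k in atTop, c p k = 0) (hd : ∀ p k, dist (c p (k + 1)) (c p k) ≤ d) (Q : ℕ) :
    ∃ h, IsStage φ x c d Q h := by
  cases nonempty_fintype ι
  obtain ⟨N, hN⟩ := eventually_atTop.1 (eventually_all.2 hc)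
  have hcN (p : ι) (k : ℤ) (hk : N < |k|) : c p k.natAbs = 0 :=
    hN _ (by rw [Int.abs_eq_natAbs] at hk; omega) p
  obtain ⟨u, hu⟩ := exists_isBumpFamily hinj ((2 * N + 1) * (Q + 1))
  let h : X → ℝ≥0 := towerSup φ u (fun p k => c p k.natAbs) N
  have hbad {p : ι} {k : ℤ} (hk : h ((φ ^ k) (x p)) ≠ c p k.natAbs) :
      ∃ v ∈ returnTimes φ u (x p), v ≠ 0 ∧ |k - v| ≤ N :=
    hu.exists_returnTimes_of_towerSup_ne (by positivity) hcN hk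
  have hcont : Continuous fun y => (h y : ℝ) :=
    NNReal.continuous_coe.comp (continuous_towerSup hu.continuous)
  obtain ⟨b, hb⟩ : ∃ b : ℝ, ∀ y, ‖(h y : ℝ)‖ ≤ b := ⟨_, fun y =>
    (NNReal.norm_eq _).trans_le (NNReal.coe_le_coe.2 (towerSup_le_sup hu.le_one y))⟩
  refine ⟨.ofNormedAddCommGroup _ hcont b hb, fun y => ?_, fun p k => ?_, fun p k hk => ?_,
    fun p => ?_⟩
  · exact dist_towerSup_apply_le hcN hu.le_one (fun p => dist_natAbs_add_one_le (hd p)) y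
  · exact NNReal.coe_le_coe.2 (hu.height_le_towerSup hcN p k)
  · refine NNReal.coe_inj.2 (by_contra fun hne => ?_)
    obtain ⟨v, hv, hv0, hkv⟩ := hbad hne
    refine hv0 (hu.returnTimes_separated hv (hu.zero_mem_returnTimes p) ?_)
    have hvNQ : |v - 0| ≤ N + Q := by grind
    nlinarith
  · refine (isSparse_of_separated (hu.zero_mem_returnTimes p)
      (fun v hv w hw => hu.returnTimes_separated hv hw) le_rfl).mono fun k hk => ?_
    exact hbad (k := k) fun heq => hk (congrArg NNReal.toReal heq)

end tower

/-! ### Series of coboundaries -/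

section coboundary

variable {X : Type*} [TopologicalSpace X] {φ : X ≃ₜ X}

/-- The coboundary `h ∘ φ - h` of a bounded continuous function. -/
noncomputable def coboundary (φ : X ≃ₜ X) (h : X →ᵇ ℝ) : X →ᵇ ℝ :=
  h.compContinuous φ - h

lemma coboundary_apply (h : X →ᵇ ℝ) (y : X) : coboundary φ h y = h (φ y) - h y := rfl

lemma summable_norm_coboundary {h : ℕ → X →ᵇ ℝ} {d : ℕ → ℝ≥0} (hd : Summable d)
    (hh : ∀ n y, dist (h n (φ y)) (h n y) ≤ d n) : Summable fun n => ‖coboundary φ (h n)‖ :=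
  .of_nonneg_of_le (fun _ => norm_nonneg _)
    (fun n => (BoundedContinuousFunction.norm_le (d n).2).2 (hh n)) (NNReal.summable_coe.2 hd)

lemma tsum_coboundary_apply {h : ℕ → X →ᵇ ℝ} (hh : Summable fun n => coboundary φ (h n)) (y : X) :
    (∑' n, coboundary φ (h n)) y = ∑' n, (h n (φ y) - h n y) :=
  (BoundedContinuousFunction.evalCLM ℝ y).map_tsum hh

lemma isOrbitPotential_tsum {h : ℕ → X →ᵇ ℝ} (hh : Summable fun n => coboundary φ (h n)) {x : X}
    (hx : ∀ k : ℤ, Summable fun n => h n ((φ ^ k) x)) :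
    IsOrbitPotential φ ⇑(∑' n, coboundary φ (h n)) x fun k => ∑' n, h n ((φ ^ k) x) := by
  intro k
  have hk := hx (k + 1)
  simp only [homeomorph_zpow_add_one_apply] at hk ⊢
  rw [tsum_coboundary_apply hh, hk.tsum_sub (hx k), add_sub_cancel]

variable [MeasurableSpace X] [BorelSpace X] {ν : Measure X}

lemma integral_coboundary [IsFiniteMeasure ν] (hν : IsInvariantMeasure φ ν) (h : X →ᵇ ℝ) :
    ∫ y, coboundary φ h y ∂ν = 0 := by
  have hmp : MeasurePreserving φ ν ν :=
    ⟨φ.measurable, Measure.ext fun B hB => by rw [Measure.map_apply φ.measurable hB, hν B hB]⟩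
  have hint := h.integrable ν
  have hint' : Integrable (fun y => h (φ y)) ν := hmp.integrable_comp_of_integrable hint
  simp only [coboundary_apply]
  rw [integral_sub hint' hint, hmp.integral_comp φ.measurableEmbedding, sub_self]

lemma integral_tsum_coboundary [IsFiniteMeasure ν] (hν : IsInvariantMeasure φ ν) {h : ℕ → X →ᵇ ℝ}
    (hh : Summable fun n => ‖coboundary φ (h n)‖) : ∫ y, (∑' n, coboundary φ (h n)) y ∂ν = 0 := by
  have hint (n : ℕ) : Integrable (coboundary φ (h n)) ν := (coboundary φ (h n)).integrable ν
  have hle (n : ℕ) : ∫ y, ‖coboundary φ (h n) y‖ ∂ν ≤ ν.real Set.univ * ‖coboundary φ (h n)‖ := by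
    refine (integral_mono (hint n).norm (integrable_const _)
      (coboundary φ (h n)).norm_coe_le_norm).trans_eq ?_
    rw [integral_const, smul_eq_mul]
  have hnorm : Summable fun n => ∫ y, ‖coboundary φ (h n) y‖ ∂ν :=
    .of_nonneg_of_le (fun _ => integral_nonneg fun _ => norm_nonneg _) hle (hh.mul_left _)
  calc ∫ y, (∑' n, coboundary φ (h n)) y ∂ν
      = ∫ y, ∑' n, coboundary φ (h n) y ∂ν := by
        simp only [tsum_coboundary_apply hh.of_norm, coboundary_apply]
    _ = ∑' n, ∫ y, coboundary φ (h n) y ∂ν :=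
        (hasSum_integral_of_summable_integral_norm hint hnorm).tsum_eq.symm
    _ = 0 := by simp only [integral_coboundary hν, tsum_zero]

end coboundary

section stages

variable {X ι : Type*} [TopologicalSpace X] {φ : X ≃ₜ X} {x : ι → X} {c : ι → ℕ → ℕ → ℝ≥0}
  {d : ℕ → ℝ≥0} {h : ℕ → X →ᵇ ℝ}

lemma summable_stages (hh : ∀ n, IsStage φ x (c · n) (d n) (2 ^ (n + 2)) (h n)) {p : ι} {k : ℤ}
    (hc : Summable fun n => c p n k.natAbs) : Summable fun n => h n ((φ ^ k) (x p)) := by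
  refine ((NNReal.summable_coe.2 hc).congr_atTop ?_)
  filter_upwards [eventually_ge_atTop k.natAbs] with n hn
  exact ((hh n).eq p k (hn.trans (Nat.lt_two_pow_self.le.trans
    (Nat.pow_le_pow_right two_pos (by omega))))).symm

lemma isSparseMajorant_tsum_stages
    (hh : ∀ n, IsStage φ x (c · n) (d n) (2 ^ (n + 2)) (h n)) {p : ι} {g : ℕ → ℝ≥0}
    (hg : ∀ k, HasSum (fun n => c p n k) (g k)) :
    IsSparseMajorant g fun k => ∑' n, h n ((φ ^ k) (x p)) where
  le k := hasSum_le (fun n => (hh n).le p k) (NNReal.hasSum_coe.2 (hg k.natAbs))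
    (summable_stages hh (hg k.natAbs).summable).hasSum
  eq_off_sparse := by
    refine ⟨_, fun n => (hh n).isSparse p, fun k hk => ?_⟩
    simp only [Set.mem_iUnion, not_exists, Set.mem_ofPred_eq, not_not] at hk
    simp only [hk]
    exact (NNReal.hasSum_coe.2 (hg k)).tsum_eq

theorem exists_isOrbitPotential_isSparseMajorant [T35Space X] [MeasurableSpace X] [BorelSpace X]
    [Finite ι] (hinj : Function.Injective fun a : ι × ℤ => (φ ^ a.2) (x a.1))
    {g : ι → ℕ → ℝ≥0} (hg : ∀ p, IsSlowProfile (g p)) :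
    ∃ F : X →ᵇ ℝ, (∀ p, ∃ H, IsOrbitPotential φ F (x p) H ∧ IsSparseMajorant (g p) H) ∧
      ∀ ν : Measure X, IsFiniteMeasure ν → IsInvariantMeasure φ ν → ∫ y, F y ∂ν = 0 := by
  cases nonempty_fintype ι
  choose c d hd hc0 hcd hcg using fun p => (hg p).exists_hasSum_bumps
  have hstage (n : ℕ) : ∃ h, IsStage φ x (c · n) (∑ p, d p n) (2 ^ (n + 2)) h :=
    exists_isStage hinj (fun p => hc0 p n) (fun p k => (hcd p n k).trans <| NNReal.coe_le_coe.2 <|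
      Finset.single_le_sum_of_canonicallyOrdered (f := (d · n)) (Finset.mem_univ p)) _
  choose h hh using hstage
  have hF := summable_norm_coboundary (summable_sum fun p _ => hd p) fun n => (hh n).dist_le
  refine ⟨∑' n, coboundary φ (h n), fun p => ⟨_, isOrbitPotential_tsum hF.of_norm fun k =>
    summable_stages hh (hcg p k.natAbs).summable, isSparseMajorant_tsum_stages hh (hcg p)⟩,
    fun ν _ hν => integral_tsum_coboundary hν hF⟩

end stages

theorem stmt17_general {X ι : Type*} [TopologicalSpace X] [T35Space X] [MeasurableSpace X]
    [BorelSpace X] [Finite ι] (φ : X ≃ₜ X) (x : ι → X)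
    (hnonper : ∀ p, ∀ n : ℕ, 1 ≤ n → φ^[n] (x p) ≠ x p)
    (hdisj : ∀ p p', p ≠ p' → Disjoint (zOrbit φ (x p)) (zOrbit φ (x p')))
    (J : ι → Set ℝ) (hJ : ∀ p, ∃ b < 0, J p = Set.Iic b ∨ J p = Set.Iio b) :
    ∃ F : X →ᵇ ℝ,
      (∀ p, ∀ β : ℝ,
        (∃ m : Measure X, IsConformalMeasure φ F β m ∧ m (zOrbit φ (x p))ᶜ = 0) ↔ β ∈ J p) ∧
      ∀ ν : Measure X, IsFiniteMeasure ν → IsInvariantMeasure φ ν → ∫ y, F y ∂ν = 0 := by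
  choose g hg hgJ using fun p => exists_isSlowProfile_summable_iff (hJ p)
  obtain ⟨F, hF, hFν⟩ := exists_isOrbitPotential_isSparseMajorant
    (injective_prod_zpow_apply hnonper hdisj) hg
  refine ⟨F, fun p β => ?_, hFν⟩
  obtain ⟨H, hpot, hmaj⟩ := hF p
  rw [hpot.exists_isConformalMeasure_iff F.continuous.measurable (injective_zpow_apply (hnonper p)),
    hmaj.tsum_orbitWeight_ne_top_iff (hg p).monotone, hgJ]

theorem stmt17 {X : Type*} [MetricSpace X] [CompactSpace X]
    [MeasurableSpace X] [BorelSpace X]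
    (φ : X ≃ₜ X) (q : ℕ) (x : Fin q → X)
    (hnonper : ∀ p : Fin q, ∀ n : ℕ, 1 ≤ n → (φ : X → X)^[n] (x p) ≠ x p)
    (hdisj : ∀ p p' : Fin q, p ≠ p' → Disjoint (zOrbit φ (x p)) (zOrbit φ (x p')))
    (βp : Fin q → ℝ) (hβp : ∀ p, βp p < 0) (closed : Fin q → Bool) :
    ∃ F : X → ℝ, Continuous F ∧
      (∀ p : Fin q, ∀ β : ℝ,
        (∃ m : Measure X, IsConformalMeasure φ F β m ∧ m ((zOrbit φ (x p))ᶜ) = 0) ↔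
          β ∈ (if closed p then Set.Iic (βp p) else Set.Iio (βp p))) ∧
      (∀ ν : Measure X, IsProbabilityMeasure ν → IsInvariantMeasure φ ν →
        ∫ y, F y ∂ν = 0) := by
  obtain ⟨F, hF, hFν⟩ := stmt17_general φ x hnonper hdisj _
    fun p => ⟨βp p, hβp p, ite_eq_or_eq (closed p = true) _ _⟩
  exact ⟨F, F.continuous, hF, fun ν _ => hFν ν inferInstance⟩
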